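/- Let X be an infinite-dimensional reflexive real Banach space with topological dual X*, and let T : X → X* be a continuous potential operator. Assume that T is closed, that T is not monotone, that the functional J_T is sequentially weakly lower semicontinuous, and that J_T + φ is coercive for every φ ∈ X*. Suppose moreover that there exists a closed σ-compact set B ⊂ X such that the restriction of T to X \ B is of class C¹. Then the set S̃ of all points x ∈ X \ B at which the Fréchet derivative T'(x) ∈ L(X, X*) is not invertible is not σ-compact. -/

import Mathlib

open Filter Topology Set NormedSpace

/-!
Suppose the singular set were σ-compact and let `S` be its union with `B`. Off `S` the map `T` is a
local homeomorphism by the inverse function theorem, so its fibres have empty interior; as `T` is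
closed, they are compact and `T` is proper. Hence `T` restricts to a covering map over the
complement of the σ-compact set `T(S)`. In infinite dimension the complement of a σ-compact set is
dense and simply connected, because paths and homotopies can be pushed off the set along a generic
direction; so this covering is injective. On the other hand, for each `x` the functional
`J_T - T(x)` has a global minimizer `z`, and `T(z) = T(x)`. If `T(x) ∉ T(S)`, then `z = x`, i.e.
`T(x)` is a global subgradient of `J_T` at `x`. By density this holds for every `x`, and so `T` is
monotone.
-/

open Bornology Function TopologicalSpace
open scoped unitInterval

section SigmaCompact

variable {𝕜 E : Type*} [NontriviallyNormedField 𝕜] [CompleteSpace 𝕜]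
  [NormedAddCommGroup E] [NormedSpace 𝕜 E]

theorem interior_eq_empty_of_isCompact (hE : ¬ FiniteDimensional 𝕜 E) {K : Set E}
    (hK : IsCompact K) : interior K = ∅ := by
  rw [← not_nonempty_iff_eq_empty]
  rintro ⟨x, hx⟩
  exact hE (.of_exists_totallyBounded_nhds 𝕜
    ⟨x, K, mem_interior_iff_mem_nhds.mp hx, hK.totallyBounded⟩)

theorem dense_compl_of_isSigmaCompact [BaireSpace E] (hE : ¬ FiniteDimensional 𝕜 E) {S : Set E}
    (hS : IsSigmaCompact S) : Dense Sᶜ := by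
  obtain ⟨K, hK, rfl⟩ := hS
  rw [compl_iUnion]
  exact dense_iInter_of_isOpen (fun n ↦ (hK n).isClosed.isOpen_compl) fun n ↦
    interior_eq_empty_iff_dense_compl.mp (interior_eq_empty_of_isCompact hE (hK n))

theorem isSigmaCompact_union {P : Type*} [TopologicalSpace P] {S T : Set P}
    (hS : IsSigmaCompact S) (hT : IsSigmaCompact T) : IsSigmaCompact (S ∪ T) :=
  union_eq_iUnion ▸ isSigmaCompact_iUnion _ (Bool.forall_bool.mpr ⟨hT, hS⟩)

theorem isSigmaCompact_support {P F : Type*} [TopologicalSpace P] [SigmaCompactSpace P]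
    [NormedAddCommGroup F] {b : P → F} (hb : Continuous b) : IsSigmaCompact (support b) := by
  have support_eq : support b = ⋃ n : ℕ, {p | 1 / ((n : ℝ) + 1) ≤ ‖b p‖} := by
    ext p
    simp only [mem_support, mem_iUnion, mem_ofPred_eq]
    constructor
    · intro hp
      obtain ⟨n, hn⟩ := exists_nat_one_div_lt (norm_pos_iff.mpr hp)
      exact ⟨n, hn.le⟩
    · rintro ⟨n, hn⟩
      exact norm_pos_iff.mp (Nat.one_div_pos_of_nat.trans_le hn)
  rw [support_eq]
  exact isSigmaCompact_iUnion _ fun n ↦ isSigmaCompact_univ.of_isClosed_subset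
    (isClosed_le continuous_const hb.norm) (subset_univ _)

/-- The bad directions `v` are the values of `(p, s) ↦ (b p)⁻¹ • (s - h p)` on the σ-compact
`support b × S`, so by density of the complement some `v` is not bad. -/
theorem exists_forall_add_smul_notMem [BaireSpace E] (hE : ¬ FiniteDimensional 𝕜 E) {S : Set E}
    (hS : IsSigmaCompact S) {P : Type*} [TopologicalSpace P] [SigmaCompactSpace P]
    {h : P → E} (hh : Continuous h) {b : P → 𝕜} (hb : Continuous b) :
    ∃ v : E, ∀ p, b p ≠ 0 → h p + b p • v ∉ S := by
  have : SigmaCompactSpace (support b) :=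
    isSigmaCompact_iff_sigmaCompactSpace.mp (isSigmaCompact_support hb)
  have : SigmaCompactSpace S := isSigmaCompact_iff_sigmaCompactSpace.mp hS
  let direction : support b × S → E := fun q ↦ (b q.1)⁻¹ • ((q.2 : E) - h q.1)
  have continuous_direction : Continuous direction :=
    .smul (.inv₀ (by fun_prop) fun q ↦ q.1.2) (by fun_prop)
  obtain ⟨v, hv⟩ :=
    (dense_compl_of_isSigmaCompact hE (isSigmaCompact_range continuous_direction)).nonempty
  refine ⟨v, fun p hp hpS ↦ hv ⟨(⟨p, hp⟩, ⟨_, hpS⟩), ?_⟩⟩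
  simp [direction, smul_smul, hp]

end SigmaCompact

section SimplyConnected

variable {E : Type*} [NormedAddCommGroup E] [NormedSpace ℝ E] [BaireSpace E]

theorem eq_zero_or_eq_one_of_mul_one_sub_eq_zero {t : I} (ht : (t : ℝ) * (1 - t) = 0) :
    t = 0 ∨ t = 1 := by
  obtain h | h := mul_eq_zero.mp ht
  · exact .inl (Subtype.ext h)
  · exact .inr (Subtype.ext (sub_eq_zero.mp h).symm)

theorem isPathConnected_compl_of_isSigmaCompact (hE : ¬ FiniteDimensional ℝ E) {S : Set E}
    (hS : IsSigmaCompact S) : IsPathConnected Sᶜ := by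
  refine isPathConnected_iff.mpr
    ⟨(dense_compl_of_isSigmaCompact hE hS).nonempty, fun x hx y hy ↦ ?_⟩
  obtain ⟨v, hv⟩ := exists_forall_add_smul_notMem hE hS (P := I) (Path.segment x y).continuous
    (b := fun t ↦ (t : ℝ) * (1 - t)) (by fun_prop)
  let arc : Path x y :=
    { toFun := fun t ↦ Path.segment x y t + ((t : ℝ) * (1 - t)) • v
      source' := by simp
      target' := by simp }
  refine ⟨arc, fun t ↦ ?_⟩
  by_cases ht : (t : ℝ) * (1 - t) = 0
  · obtain rfl | rfl := eq_zero_or_eq_one_of_mul_one_sub_eq_zero ht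
    · simpa only [arc.source]
    · simpa only [arc.target]
  · exact hv t ht

theorem isSimplyConnected_compl_of_isSigmaCompact (hE : ¬ FiniteDimensional ℝ E) {S : Set E}
    (hS : IsSigmaCompact S) : IsSimplyConnected Sᶜ := by
  refine isSimplyConnected_iff_exists_homotopy_refl_forall_mem.mpr
    ⟨isPathConnected_compl_of_isSigmaCompact hE hS, fun x γ hγ ↦ ?_⟩
  let straightLine : γ.toContinuousMap.Homotopy (Path.refl x).toContinuousMap := .affine _ _
  let bump : I × I → ℝ := fun q ↦ ((q.1 : ℝ) * (1 - q.1)) * ((q.2 : ℝ) * (1 - q.2))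
  obtain ⟨v, hv⟩ := exists_forall_add_smul_notMem hE hS straightLine.continuous
    (b := bump) (by fun_prop)
  have straightLine_notMem {q : I × I} (hq : bump q = 0) : straightLine q ∉ S := by
    obtain ⟨s, t⟩ := q
    have hx : x ∉ S := by simpa using hγ 0
    obtain hs | ht := mul_eq_zero.mp hq
    · obtain rfl | rfl := eq_zero_or_eq_one_of_mul_one_sub_eq_zero hs
      · simpa [straightLine] using hγ t
      · simpa [straightLine] using hx
    · obtain rfl | rfl := eq_zero_or_eq_one_of_mul_one_sub_eq_zero ht <;>
        simpa [straightLine] using hx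
  refine ⟨{
    toFun := fun q ↦ straightLine q + bump q • v
    map_zero_left := fun t ↦ by simp [bump]
    map_one_left := fun t ↦ by simp [bump]
    prop' := ?_ }, fun q ↦ ?_⟩
  · rintro s t (rfl | rfl) <;> simp [bump, straightLine]
  · change straightLine q + bump q • v ∉ S
    by_cases hq : bump q = 0
    · simpa [hq] using straightLine_notMem hq
    · exact hv q hq

end SimplyConnected

section Covering

variable {X Y : Type*} [TopologicalSpace X] [TopologicalSpace Y] {p : X → Y}

theorem injective_of_isCoveringMap [PathConnectedSpace X] [SimplyConnectedSpace Y]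
    (hp : IsCoveringMap p) : Injective p := by
  intro x y hxy
  have lift_loop : hp.monodromy (.refl (p x)) ⟨x, rfl⟩ = ⟨y, hxy.symm⟩ :=
    hp.monodromy_eq_of_map_eq (.mk (PathConnectedSpace.somePath x y)) (Subsingleton.elim _ _)
  rw [hp.monodromy_refl] at lift_loop
  exact congrArg Subtype.val lift_loop

theorem isCoveringMapOn_of_isProperMap [T2Space X] {s : Set Y} (hp : IsProperMap p)
    (hloc : IsLocalHomeomorphOn p (p ⁻¹' s)) : IsCoveringMapOn p s := by
  refine hp.isClosedMap.isCoveringMapOn_of_isLocalHomeomorphOn (fun y hy ↦ ?_) hloc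
  refine (hp.isCompact_preimage isCompact_singleton).finite
    (.of_openPartialHomeomorph p subset_rfl ?_)
  rintro x rfl
  obtain ⟨e, hxe, he⟩ := hloc x hy
  exact ⟨e, hxe, he.symm⟩

theorem isSigmaCompact_preimage_of_isProperMap (hp : IsProperMap p) {s : Set Y}
    (hs : IsSigmaCompact s) : IsSigmaCompact (p ⁻¹' s) := by
  obtain ⟨K, hK, rfl⟩ := hs
  rw [preimage_iUnion]
  exact isSigmaCompact_iUnion_of_isCompact _ fun n ↦ hp.isCompact_preimage (hK n)

end Covering

theorem injOn_compl_preimage_image_of_isProperMap {X Y : Type*}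
    [NormedAddCommGroup X] [NormedSpace ℝ X] [BaireSpace X]
    [NormedAddCommGroup Y] [NormedSpace ℝ Y] [BaireSpace Y]
    (hX : ¬ FiniteDimensional ℝ X) (hY : ¬ FiniteDimensional ℝ Y) {f : X → Y} (hf : IsProperMap f)
    {S : Set X} (hS : IsSigmaCompact S) (hloc : IsLocalHomeomorphOn f Sᶜ) :
    InjOn f (f ⁻¹' (f '' S))ᶜ := by
  have hfS : IsSigmaCompact (f '' S) := hS.image hf.continuous
  have covering : IsCoveringMapOn f (f '' S)ᶜ := isCoveringMapOn_of_isProperMap hf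
    (hloc.mono (compl_subset_compl.mpr (subset_preimage_image f S)))
  have : PathConnectedSpace (f ⁻¹' (f '' S)ᶜ) := isPathConnected_iff_pathConnectedSpace.mp
    (isPathConnected_compl_of_isSigmaCompact hX (isSigmaCompact_preimage_of_isProperMap hf hfS))
  have : SimplyConnectedSpace ↥(f '' S)ᶜ :=
    (isSimplyConnected_compl_of_isSigmaCompact hY hfS).simplyConnectedSpace
  intro x hx y hy hxy
  have injective_restrict : Injective ((f '' S)ᶜ.restrictPreimage f) :=
    injective_of_isCoveringMap covering.isCoveringMap_restrictPreimage
  exact congrArg Subtype.val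
    (injective_restrict (a₁ := ⟨x, hx⟩) (a₂ := ⟨y, hy⟩) (Subtype.ext hxy))

section ClosedMap

theorem interior_preimage_singleton_eq_empty {X Y : Type*} [TopologicalSpace X]
    [TopologicalSpace Y] [∀ x : X, (𝓝[≠] x).NeBot] {f : X → Y} {D : Set X} (hD : Dense D)
    (hloc : IsLocalHomeomorphOn f D) (y : Y) : interior (f ⁻¹' {y}) = ∅ := by
  by_contra! hne
  obtain ⟨x, hx, hxD⟩ := hD.inter_open_nonempty _ isOpen_interior hne
  obtain ⟨e, hxe, rfl⟩ := hloc x hxD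
  have fiber_subset : interior (e ⁻¹' {y}) ∩ e.source ⊆ {x} := fun z ⟨hz, hze⟩ ↦
    e.injOn hze hxe ((interior_subset hz).trans (interior_subset hx).symm)
  have hx_interior : x ∈ interior {x} :=
    interior_maximal fiber_subset (isOpen_interior.inter e.open_source) ⟨hx, hxe⟩
  simp at hx_interior

theorem mapClusterPt_cofinite_of_mem_closure_range {ι X : Type*} [TopologicalSpace X] [T1Space X]
    {z : ι → X} {a : X} (ha : a ∈ closure (range z)) (haz : a ∉ range z) :
    MapClusterPt a cofinite z := by
  refine mapClusterPt_iff_frequently.mpr fun s hs ↦ ?_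
  refine frequently_cofinite_iff_infinite.mpr fun hfin ↦ ?_
  have visited_closed : IsClosed (z '' {i | z i ∈ s}) := (hfin.image z).isClosed
  have ha' : a ∉ z '' {i | z i ∈ s} := fun h ↦ haz (image_subset_range _ _ h)
  obtain ⟨_, ⟨hxs, hx⟩, i, rfl⟩ := mem_closure_iff_nhds.mp ha _
    (inter_mem hs (visited_closed.isOpen_compl.mem_nhds ha'))
  exact hx ⟨i, hxs, rfl⟩

theorem exists_mapClusterPt_of_isClosedMap {ι X Y : Type*} [TopologicalSpace X] [T1Space X]
    [TopologicalSpace Y] {f : X → Y} (hf : IsClosedMap f) {l : Filter ι} [l.NeBot] {z : ι → X}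
    {y : Y} (hlim : Tendsto (f ∘ z) l (𝓝 y)) (hne : ∀ i, f (z i) ≠ y) :
    ∃ a, MapClusterPt a cofinite z := by
  obtain ⟨a, ha, rfl⟩ : y ∈ f '' closure (range z) :=
    (hf _ isClosed_closure).mem_of_tendsto hlim
      (.of_forall fun i ↦ mem_image_of_mem f (subset_closure (mem_range_self i)))
  exact ⟨a, mapClusterPt_cofinite_of_mem_closure_range ha fun ⟨i, hi⟩ ↦ hne i (congrArg f hi)⟩

variable {X Y : Type*} [MetricSpace X] [TopologicalSpace Y] [T1Space Y]
  [FirstCountableTopology Y] {f : X → Y}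

/-- Vaĭnšteĭn's lemma: a sequence in the frontier is shadowed by points off the fibre whose images
tend to `y`, and closedness of `f` forces such points to cluster. -/
theorem isCompact_frontier_preimage_singleton (hf : IsClosedMap f) (hcont : Continuous f) (y : Y) :
    IsCompact (frontier (f ⁻¹' {y})) := by
  refine isCompact_iff_isSeqCompact.mpr fun x hx ↦ ?_
  obtain ⟨V, hV⟩ := (𝓝 y).exists_antitone_basis
  have exists_near (n : ℕ) : ∃ z, dist z (x n) < 1 / ((n : ℝ) + 1) ∧ f z ∈ V n ∧ f z ≠ y := by
    have hxy : f (x n) = y := (isClosed_singleton.preimage hcont).frontier_subset (hx n)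
    have hball : Metric.ball (x n) (1 / ((n : ℝ) + 1)) ∈ 𝓝 (x n) :=
      Metric.ball_mem_nhds _ Nat.one_div_pos_of_nat
    have hpre : f ⁻¹' V n ∈ 𝓝 (x n) := hcont.continuousAt (hxy ▸ hV.mem n)
    have hx' : x n ∈ closure (f ⁻¹' {y})ᶜ := by
      rw [closure_compl]
      exact (hx n).2
    obtain ⟨z, ⟨hzx, hzV⟩, hzy⟩ := mem_closure_iff_nhds.mp hx' _ (inter_mem hball hpre)
    exact ⟨z, hzx, hzV, hzy⟩
  choose z hzx hzV hzy using exists_near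
  obtain ⟨a, ha⟩ := exists_mapClusterPt_of_isClosedMap hf (hV.tendsto hzV) hzy
  rw [Nat.cofinite_eq_atTop] at ha
  obtain ⟨ψ, hψ, hlim⟩ := ha.tendsto_subseq
  have hxlim : Tendsto (x ∘ ψ) atTop (𝓝 a) := hlim.congr_dist <|
    squeeze_zero (fun _ ↦ dist_nonneg) (fun n ↦ (hzx (ψ n)).le)
      (tendsto_one_div_add_atTop_nhds_zero_nat.comp hψ.tendsto_atTop)
  exact ⟨a, isClosed_frontier.mem_of_tendsto hxlim (.of_forall fun n ↦ hx (ψ n)), ψ, hψ, hxlim⟩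

theorem isProperMap_of_isLocalHomeomorphOn_dense [∀ x : X, (𝓝[≠] x).NeBot] (hf : IsClosedMap f)
    (hcont : Continuous f) {D : Set X} (hD : Dense D) (hloc : IsLocalHomeomorphOn f D) :
    IsProperMap f := by
  refine isProperMap_iff_isClosedMap_and_compact_fibers.mpr ⟨hcont, hf, fun {y} ↦ ?_⟩
  have hint : interior (f ⁻¹' {y}) = ∅ := interior_preimage_singleton_eq_empty hD hloc y
  have hfrontier : frontier (f ⁻¹' {y}) = f ⁻¹' {y} := by
    rw [(isClosed_singleton.preimage hcont).frontier_eq, hint, sdiff_empty]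
  exact hfrontier ▸ isCompact_frontier_preimage_singleton hf hcont y

end ClosedMap

section WeakCompactness

variable {𝕜 X : Type*} [RCLike 𝕜] [NormedAddCommGroup X] [NormedSpace 𝕜 X]

theorem exists_seq_strongDual_separating {s : Set X} (hs : IsSeparable s) :
    ∃ g : ℕ → StrongDual 𝕜 X, ∀ y ∈ s, (∀ n, g n y = 0) → y = 0 := by
  obtain ⟨c, hc, hsc⟩ := hs
  obtain rfl | hne := c.eq_empty_or_nonempty
  · exact ⟨0, fun y hy ↦ by simpa using hsc hy⟩
  obtain ⟨d, rfl⟩ := hc.exists_eq_range hne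
  choose g hg_norm hg_apply using fun n ↦ exists_dual_vector'' 𝕜 (d n)
  refine ⟨g, fun y hy hgy ↦ norm_eq_zero.mp (le_antisymm ?_ (norm_nonneg y))⟩
  refine le_of_forall_pos_le_add fun ε hε ↦ ?_
  obtain ⟨_, ⟨n, rfl⟩, hn⟩ := Metric.mem_closure_iff.mp (hsc hy) (ε / 2) (half_pos hε)
  rw [dist_eq_norm] at hn
  have norm_le : ‖d n‖ ≤ ‖y - d n‖ := by
    calc ‖d n‖ = ‖g n (y - d n)‖ := by simp [hgy n, hg_apply n]
      _ ≤ ‖y - d n‖ := by simpa using (g n).le_of_opNorm_le (hg_norm n) (y - d n)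
  linarith [norm_le_norm_add_norm_sub (d n) y, norm_sub_rev (d n) y]

theorem continuous_strongDual_apply_weakSpace (φ : StrongDual 𝕜 X) :
    Continuous fun x : WeakSpace 𝕜 X ↦ φ ((toWeakSpace 𝕜 X).symm x) :=
  WeakBilin.eval_continuous (topDualPairing 𝕜 X).flip φ

theorem metrizableSpace_of_isCompact_of_isSeparable {K : Set (WeakSpace 𝕜 X)} (hK : IsCompact K)
    (hsep : IsSeparable (toWeakSpace 𝕜 X ⁻¹' K)) : MetrizableSpace K := by
  have : CompactSpace K := isCompact_iff_compactSpace.mp hK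
  obtain ⟨g, hg⟩ := exists_seq_strongDual_separating (𝕜 := 𝕜) (hsep.span (R := 𝕜))
  refine Metric.PiNatEmbed.TopologicalSpace.MetrizableSpace.of_countable_separating
    (fun n (x : K) ↦ g n ((toWeakSpace 𝕜 X).symm x))
    (fun n ↦ (continuous_strongDual_apply_weakSpace (g n)).comp continuous_subtype_val)
    fun x y hxy ↦ ?_
  contrapose! hxy
  have hsub : (toWeakSpace 𝕜 X).symm x - (toWeakSpace 𝕜 X).symm y = 0 :=
    hg _ (sub_mem (Submodule.subset_span x.2) (Submodule.subset_span y.2)) fun n ↦ by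
      rw [map_sub, hxy n, sub_self]
  exact Subtype.ext ((toWeakSpace 𝕜 X).symm.injective (sub_eq_zero.mp hsub))

theorem isSeqCompact_of_isCompact_of_isSeparable {K : Set (WeakSpace 𝕜 X)} (hK : IsCompact K)
    (hsep : IsSeparable (toWeakSpace 𝕜 X ⁻¹' K)) : IsSeqCompact K := by
  have : CompactSpace K := isCompact_iff_compactSpace.mp hK
  have : MetrizableSpace K := metrizableSpace_of_isCompact_of_isSeparable hK hsep
  simpa using IsSeqCompact.range (continuous_subtype_val (p := (· ∈ K))).seqContinuous

theorem isClosed_toWeakSpace_image_topologicalClosure (V : Submodule 𝕜 X) :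
    IsClosed (toWeakSpace 𝕜 X '' (V.topologicalClosure : Set X)) := by
  let _ := NormedSpace.restrictScalars ℝ 𝕜 X
  have hconv : Convex ℝ (V : Set X) := (V.restrictScalars ℝ).convex
  rw [Submodule.topologicalClosure_coe, hconv.toWeakSpace_closure 𝕜]
  exact isClosed_closure

/-- The easy half of the Eberlein–Šmulian theorem: a sequence lives in the closed span of its
range, which is separable and weakly closed. -/
theorem isSeqCompact_of_isCompact_weakSpace {K : Set (WeakSpace 𝕜 X)} (hK : IsCompact K) :
    IsSeqCompact K := by
  intro u hu
  let Z : Submodule 𝕜 X :=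
    (Submodule.span 𝕜 (range fun n ↦ (toWeakSpace 𝕜 X).symm (u n))).topologicalClosure
  have hZsep : IsSeparable (Z : Set X) := (countable_range _).isSeparable.span.closure
  have hZclosed : IsClosed (toWeakSpace 𝕜 X '' Z) :=
    isClosed_toWeakSpace_image_topologicalClosure _
  have huZ (n : ℕ) : u n ∈ toWeakSpace 𝕜 X '' Z :=
    ⟨_, Submodule.le_topologicalClosure _ (Submodule.subset_span (mem_range_self n)), rfl⟩
  have hseq : IsSeqCompact (K ∩ toWeakSpace 𝕜 X '' Z) := by
    refine isSeqCompact_of_isCompact_of_isSeparable (hK.inter_right hZclosed) (hZsep.mono ?_)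
    rw [preimage_inter, preimage_image_eq _ (toWeakSpace 𝕜 X).injective]
    exact inter_subset_right
  obtain ⟨x, hx, ψ, hψ, hlim⟩ := hseq fun n ↦ ⟨hu n, huZ n⟩
  exact ⟨x, hx.1, ψ, hψ, hlim⟩

theorem isCompact_closure_toWeakSpace_image (hrefl : Surjective (inclusionInDoubleDual 𝕜 X))
    {s : Set X} (hs : IsBounded s) : IsCompact (closure (toWeakSpace 𝕜 X '' s)) := by
  refine isCompact_closure_of_isBounded 𝕜 X _ ?_ fun ξ _ ↦ ?_
  · rwa [preimage_image_eq _ (toWeakSpace 𝕜 X).injective]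
  · obtain ⟨x, hx⟩ := hrefl (WeakDual.toStrongDual ξ)
    exact ⟨toWeakSpace 𝕜 X x, hx⟩

theorem exists_subseq_forall_strongDual_tendsto (hrefl : Surjective (inclusionInDoubleDual 𝕜 X))
    {s : Set X} (hs : IsBounded s) {u : ℕ → X} (hu : ∃ᶠ n in atTop, u n ∈ s) :
    ∃ (x : X) (ψ : ℕ → ℕ), StrictMono ψ ∧
      ∀ φ : StrongDual 𝕜 X, Tendsto (fun n ↦ φ (u (ψ n))) atTop (𝓝 (φ x)) := by
  have hseq := isSeqCompact_of_isCompact_weakSpace (isCompact_closure_toWeakSpace_image hrefl hs)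
  obtain ⟨x, -, ψ, hψ, hlim⟩ := hseq.subseq_of_frequently_in (x := fun n ↦ toWeakSpace 𝕜 X (u n))
    (hu.mono fun n hn ↦ subset_closure (mem_image_of_mem _ hn))
  exact ⟨(toWeakSpace 𝕜 X).symm x, ψ, hψ, fun φ ↦
    ((continuous_strongDual_apply_weakSpace φ).tendsto x).comp hlim⟩

end WeakCompactness

section Variational

/-- Sequential weak lower semicontinuity of `f`, spelled out without limits inferior: if `u n`
converges weakly to `x`, then every `b < f x` is eventually a strict lower bound of `f (u n)`. -/
def SeqWeaklyLowerSemicontinuous {X : Type*} [NormedAddCommGroup X] [NormedSpace ℝ X]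
    (f : X → ℝ) : Prop :=
  ∀ (u : ℕ → X) (x : X),
    (∀ φ : StrongDual ℝ X, Tendsto (fun n ↦ φ (u n)) atTop (𝓝 (φ x))) →
    ∀ b < f x, ∀ᶠ n in atTop, b < f (u n)

/-- `φ` is a subgradient of `f` at `x`, in the global sense of convex analysis: the affine function
with slope `φ` that agrees with `f` at `x` lies below `f` everywhere. -/
def IsSubgradient {X : Type*} [NormedAddCommGroup X] [NormedSpace ℝ X] (f : X → ℝ)
    (φ : StrongDual ℝ X) (x : X) : Prop :=
  ∀ y, f x + φ (y - x) ≤ f y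

theorem exists_seq_forall_eventually_lt {α : Type*} [Nonempty α] {f : α → ℝ}
    (hf : ∀ x, ∃ y, f y < f x) : ∃ u : ℕ → α, ∀ x, ∀ᶠ n in atTop, f (u n) < f x := by
  obtain ⟨v, -, hv, hvmem⟩ := exists_seq_tendsto_sInf
    (range_nonempty fun x ↦ (f x : EReal)) (OrderBot.bddBelow _)
  choose u hu using hvmem
  refine ⟨u, fun x ↦ ?_⟩
  obtain ⟨y, hy⟩ := hf x
  have sInf_lt : sInf (range fun x ↦ (f x : EReal)) < f x :=
    (sInf_le (mem_range_self y)).trans_lt (EReal.coe_lt_coe_iff.mpr hy)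
  filter_upwards [hv.eventually_lt_const sInf_lt] with n hn
  rwa [← hu n, EReal.coe_lt_coe_iff] at hn

variable {X : Type*} [NormedAddCommGroup X] [NormedSpace ℝ X] {f : X → ℝ}

namespace IsSubgradient

theorem sub_apply_sub_nonneg {φ ψ : StrongDual ℝ X} {x y : X} (hx : IsSubgradient f φ x)
    (hy : IsSubgradient f ψ y) : 0 ≤ (φ - ψ) (x - y) := by
  have hxy := hx y
  have hyx := hy x
  simp only [map_sub, sub_apply] at *
  linarith

end IsSubgradient

theorem isClosed_setOf_isSubgradient {T : X → StrongDual ℝ X} (hf : Continuous f)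
    (hT : Continuous T) : IsClosed {x | IsSubgradient f (T x) x} := by
  simp only [IsSubgradient, ofPred_forall]
  exact isClosed_iInter fun y ↦ isClosed_le (by fun_prop) continuous_const

namespace SeqWeaklyLowerSemicontinuous

theorem sub_strongDual (hf : SeqWeaklyLowerSemicontinuous f) (φ : StrongDual ℝ X) :
    SeqWeaklyLowerSemicontinuous fun x ↦ f x - φ x := by
  intro u x hu b hb
  obtain ⟨c, hbc, hcf⟩ := exists_between (lt_sub_iff_add_lt.mp hb)
  filter_upwards [hf u x hu c hcf, (hu φ).eventually_lt_const (lt_sub_iff_add_lt'.mpr hbc)]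
    with n hfn hφn
  linarith

theorem exists_forall_le (hf : SeqWeaklyLowerSemicontinuous f)
    (hrefl : Surjective (inclusionInDoubleDual ℝ X)) (hcoer : Tendsto f (cobounded X) atTop) :
    ∃ z, ∀ y, f z ≤ f y := by
  by_contra! hno_min
  obtain ⟨u, hu⟩ := exists_seq_forall_eventually_lt hno_min
  have hbdd : IsBounded {x | f x < f 0} := by
    filter_upwards [hcoer.eventually_ge_atTop (f 0)] with x hx using hx.not_gt
  obtain ⟨z, ψ, hψ, hlim⟩ := exists_subseq_forall_strongDual_tendsto hrefl hbdd (hu 0).frequently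
  obtain ⟨y, hy⟩ := hno_min z
  obtain ⟨n, hbelow, habove⟩ :=
    ((hψ.tendsto_atTop.eventually (hu y)).and (hf _ z hlim (f y) hy)).exists
  exact lt_asymm hbelow habove

theorem exists_isSubgradient (hf : SeqWeaklyLowerSemicontinuous f)
    (hrefl : Surjective (inclusionInDoubleDual ℝ X)) {T : X → StrongDual ℝ X}
    (hT : ∀ x, HasFDerivAt f (T x) x) (φ : StrongDual ℝ X)
    (hcoer : Tendsto (fun x ↦ f x - φ x) (cobounded X) atTop) :
    ∃ z, T z = φ ∧ IsSubgradient f φ z := by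
  obtain ⟨z, hz⟩ := (hf.sub_strongDual φ).exists_forall_le hrefl hcoer
  have hcrit : T z - φ = 0 := IsLocalMin.hasFDerivAt_eq_zero (.of_forall hz)
    ((hT z).sub φ.hasFDerivAt)
  refine ⟨z, sub_eq_zero.mp hcrit, fun y ↦ ?_⟩
  rw [map_sub]
  linarith [hz y]

theorem isSubgradient_of_dense (hf : SeqWeaklyLowerSemicontinuous f)
    (hrefl : Surjective (inclusionInDoubleDual ℝ X)) {T : X → StrongDual ℝ X}
    (hT : ∀ x, HasFDerivAt f (T x) x) (hTcont : Continuous T)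
    (hcoer : ∀ φ : StrongDual ℝ X, Tendsto (fun x ↦ f x - φ x) (cobounded X) atTop)
    {D : Set X} (hD : Dense D) (hunique : ∀ x ∈ D, ∀ z, T z = T x → z = x) (x : X) :
    IsSubgradient f (T x) x := by
  have hfcont : Continuous f := continuous_iff_continuousAt.mpr fun x ↦ (hT x).continuousAt
  have hD_subset : D ⊆ {x | IsSubgradient f (T x) x} := fun x hx ↦ by
    obtain ⟨z, hTz, hz⟩ := hf.exists_isSubgradient hrefl hT (T x) (hcoer (T x))
    exact hunique x hx z hTz ▸ hz
  exact (isClosed_setOf_isSubgradient hfcont hTcont).closure_subset_iff.mpr hD_subset (hD x)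

end SeqWeaklyLowerSemicontinuous

end Variational

theorem isLocalHomeomorphOn_of_contDiffOn {𝕜 E F : Type*} [RCLike 𝕜] [NormedAddCommGroup E]
    [NormedSpace 𝕜 E] [CompleteSpace E] [NormedAddCommGroup F] [NormedSpace 𝕜 F] {f : E → F}
    {U : Set E} (hU : IsOpen U) (hf : ContDiffOn 𝕜 1 f U) :
    IsLocalHomeomorphOn f {x ∈ U | ∃ e : E ≃L[𝕜] F, (e : E →L[𝕜] F) = fderiv 𝕜 f x} := by
  rintro x ⟨hx, e, he⟩
  have hstrict : HasStrictFDerivAt f (e : E →L[𝕜] F) x :=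
    he ▸ (hf.contDiffAt (hU.mem_nhds hx)).hasStrictFDerivAt one_ne_zero
  exact ⟨hstrict.toOpenPartialHomeomorph f, hstrict.mem_toOpenPartialHomeomorph_source, rfl⟩

theorem not_finiteDimensional_strongDual {𝕜 E : Type*} [RCLike 𝕜] [NormedAddCommGroup E]
    [NormedSpace 𝕜 E] (hE : ¬ FiniteDimensional 𝕜 E) : ¬ FiniteDimensional 𝕜 (StrongDual 𝕜 E) :=
  fun _ ↦ hE (.of_injective (inclusionInDoubleDualLi 𝕜 (E := E)).toLinearMap
    (inclusionInDoubleDualLi 𝕜).injective)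

/-- Theorem 2 (first part): under the assumptions of Theorem 1, if moreover there is a closed
σ-compact set `B ⊂ X` such that the restriction of `T` to `X \ B` is of class `C¹`, then the
set of points `x ∈ X \ B` at which the Fréchet derivative `T'(x) ∈ L(X, X*)` is not
invertible is not σ-compact. -/
theorem tilde_singular_set_not_sigmaCompact
    {X : Type*} [NormedAddCommGroup X] [NormedSpace ℝ X] [CompleteSpace X]
    (hdim : ¬ FiniteDimensional ℝ X)
    (hrefl : Function.Surjective (inclusionInDoubleDual ℝ X))
    (T : X → StrongDual ℝ X)
    (hTcont : Continuous T)
    (JT : X → ℝ)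
    (hJT : JT = fun x => ∫ s in (0:ℝ)..1, T (s • x) x)
    (hpot : ∀ x : X, HasFDerivAt JT (T x) x)
    (hclosed : ∀ C : Set X, IsClosed C → IsClosed (T '' C))
    (hnmono : ¬ ∀ x y : X, 0 ≤ (T x - T y) (x - y))
    (hswlsc : ∀ (u : ℕ → X) (x : X),
      (∀ φ : StrongDual ℝ X, Tendsto (fun n => φ (u n)) atTop (𝓝 (φ x))) →
      ∀ b < JT x, ∀ᶠ n in atTop, b < JT (u n))
    (hcoer : ∀ φ : StrongDual ℝ X,
      Tendsto (fun x => JT x + φ x) (comap (fun x : X => ‖x‖) atTop) atTop)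
    (B : Set X) (hBclosed : IsClosed B) (hBσ : IsSigmaCompact B)
    (hTC1 : ContDiffOn ℝ 1 T Bᶜ) :
    ¬ IsSigmaCompact {x : X | x ∉ B ∧
      ¬ ∃ e : X ≃L[ℝ] StrongDual ℝ X, (e : X →L[ℝ] StrongDual ℝ X) = fderiv ℝ T x} := by
  intro hsing
  let R : Set X := {x ∈ Bᶜ | ∃ e : X ≃L[ℝ] StrongDual ℝ X, (e : X →L[ℝ] _) = fderiv ℝ T x}
  have hRc : IsSigmaCompact Rᶜ := by
    convert isSigmaCompact_union hBσ hsing using 1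
    ext x
    by_cases hx : x ∈ B <;> simp [R, hx]
  have hloc : IsLocalHomeomorphOn T Rᶜᶜ :=
    (compl_compl R).symm ▸ isLocalHomeomorphOn_of_contDiffOn hBclosed.isOpen_compl hTC1
  have : Nontrivial X := not_subsingleton_iff_nontrivial.mp fun _ ↦ hdim inferInstance
  have hproper : IsProperMap T := isProperMap_of_isLocalHomeomorphOn_dense hclosed hTcont
    (dense_compl_of_isSigmaCompact hdim hRc) hloc
  have hinj : InjOn T (T ⁻¹' (T '' Rᶜ))ᶜ := injOn_compl_preimage_image_of_isProperMap hdim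
    (not_finiteDimensional_strongDual hdim) hproper hRc hloc
  have hdense : Dense (T ⁻¹' (T '' Rᶜ))ᶜ := dense_compl_of_isSigmaCompact hdim
    (isSigmaCompact_preimage_of_isProperMap hproper (hRc.image hTcont))
  have hcoer_sub (φ : StrongDual ℝ X) : Tendsto (fun x ↦ JT x - φ x) (cobounded X) atTop := by
    simpa [sub_eq_add_neg, comap_norm_atTop] using hcoer (-φ)
  have hsubgrad := SeqWeaklyLowerSemicontinuous.isSubgradient_of_dense hswlsc hrefl hpot hTcont
    hcoer_sub hdense fun x hx z hzx ↦ hinj (by simpa [hzx] using hx) hx hzx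
  exact hnmono fun x y ↦ (hsubgrad x).sub_apply_sub_nonneg (hsubgrad y)
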